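/- Under the stated hypotheses on G, if n ≥ 13 then the graph F obtained from G by deleting the edge v_1v_{n−1} and adding the edge v_0v_k satisfies q(F) > q(G). -/

import Mathlib

open Matrix

/-- The signless Laplacian `Q(G) = D(G) + A(G)` of a finite simple graph `G`. -/
noncomputable def signlessLaplacian {V : Type*} [Fintype V] (G : SimpleGraph V) :
    Matrix V V ℝ :=
  letI := Classical.decEq V
  letI : DecidableRel G.Adj := Classical.decRel _
  Matrix.diagonal (fun v => (G.degree v : ℝ)) + G.adjMatrix ℝ

/-- The `Q`-index of `G`: the largest eigenvalue of the signless Laplacian `Q(G)`. -/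
noncomputable def qIndex {V : Type*} [Fintype V] (G : SimpleGraph V) : ℝ :=
  letI := Classical.decEq V
  sSup (spectrum ℝ (signlessLaplacian G))

/-!
The proof compares Rayleigh quotients. Let `x` be the positive eigenvector of `Q(G)` for `q = q(G)`.
Since `x ⬝ᵥ Q x` is the sum of `(x a + x b) ^ 2` over the edges `ab`, moving the edge `v₁ v_{n-1}`
to `v₀ v_k` increases `q` as soon as `x v₁ + x v_{n-1} < x v₀ + x v_k`.

For the latter, `v_k` is so well connected that its entry dominates: if `N[u] ⊆ N[w]` then
`x u ≤ x w`, which covers `v_{n-2}`, and the exceptional neighbor `v₂` of `v₃` costs only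
`x v₃ ≤ x v_k + x v₂ / 2`. Since `q ≥ Δ + 1 = n - 2` is large, the eigenvalue equations at `v₀`,
`v₁`, `v₂`, `v_{n-1}` then contradict `x v₀ + x v_k ≤ x v₁ + x v_{n-1}`.
-/

lemma dotProduct_smul_one_sub_mulVec {R ι : Type*} [CommRing R] [Fintype ι] [DecidableEq ι]
    (r : R) (A : Matrix ι ι R) (x : ι → R) :
    x ⬝ᵥ ((r • (1 : Matrix ι ι R) - A) *ᵥ x) = r * (x ⬝ᵥ x) - x ⬝ᵥ (A *ᵥ x) := by
  simp only [sub_mulVec, smul_mulVec, one_mulVec, dotProduct_sub, dotProduct_smul, smul_eq_mul]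

section RealSymmetric

variable {ι : Type*} [Fintype ι] [DecidableEq ι] {A : Matrix ι ι ℝ}

open scoped MatrixOrder in
lemma posSemidef_sSup_spectrum_smul_one_sub (hA : A.IsHermitian) :
    (sSup (spectrum ℝ A) • (1 : Matrix ι ι ℝ) - A).PosSemidef := by
  rw [← Matrix.le_iff, ← Algebra.algebraMap_eq_smul_one]
  exact le_algebraMap_of_spectrum_le
    (fun _ hr => le_csSup Matrix.finite_real_spectrum.bddAbove hr) hA.isSelfAdjoint

lemma dotProduct_mulVec_le_sSup_spectrum_mul (hA : A.IsHermitian) (x : ι → ℝ) :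
    x ⬝ᵥ (A *ᵥ x) ≤ sSup (spectrum ℝ A) * (x ⬝ᵥ x) := by
  have h := (posSemidef_sSup_spectrum_smul_one_sub hA).dotProduct_mulVec_nonneg x
  rwa [star_trivial, dotProduct_smul_one_sub_mulVec, sub_nonneg] at h

lemma mulVec_eq_sSup_spectrum_smul_of_le (hA : A.IsHermitian) {x : ι → ℝ}
    (hx : sSup (spectrum ℝ A) * (x ⬝ᵥ x) ≤ x ⬝ᵥ (A *ᵥ x)) :
    A *ᵥ x = sSup (spectrum ℝ A) • x := by
  have h := (posSemidef_sSup_spectrum_smul_one_sub hA).dotProduct_mulVec_zero_iff x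
  rw [star_trivial, dotProduct_smul_one_sub_mulVec,
    sub_mulVec, smul_mulVec, one_mulVec, sub_eq_zero, sub_eq_zero] at h
  exact (h.1 (hx.antisymm (dotProduct_mulVec_le_sSup_spectrum_mul hA x))).symm

lemma exists_mulVec_eq_sSup_spectrum_smul [Nonempty ι] (hA : A.IsHermitian) :
    ∃ x : ι → ℝ, x ≠ 0 ∧ A *ᵥ x = sSup (spectrum ℝ A) • x := by
  have hne : (spectrum ℝ A).Nonempty :=
    hA.spectrum_real_eq_range_eigenvalues ▸ Set.range_nonempty _
  have hmem := hne.csSup_mem Matrix.finite_real_spectrum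
  rw [← spectrum_toLin', ← Module.End.hasEigenvalue_iff_mem_spectrum] at hmem
  obtain ⟨x, hx⟩ := hmem.exists_hasEigenvector
  refine ⟨x, hx.2, ?_⟩
  rw [← toLin'_apply, hx.apply_eq_smul, spectrum_toLin']

lemma exists_nonneg_mulVec_eq_sSup_spectrum_smul [Nonempty ι] (hA : A.IsHermitian)
    (hA₀ : ∀ i j, 0 ≤ A i j) :
    ∃ x : ι → ℝ, x ≠ 0 ∧ (∀ i, 0 ≤ x i) ∧ A *ᵥ x = sSup (spectrum ℝ A) • x := by
  obtain ⟨x, hx₀, hx⟩ := exists_mulVec_eq_sSup_spectrum_smul hA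
  refine ⟨|x|, by simpa [funext_iff] using hx₀, fun i => abs_nonneg (x i),
    mulVec_eq_sSup_spectrum_smul_of_le hA ?_⟩
  calc sSup (spectrum ℝ A) * (|x| ⬝ᵥ |x|)
      = x ⬝ᵥ (A *ᵥ x) := by simp [hx, dotProduct, mul_left_comm, Finset.mul_sum]
    _ ≤ |x| ⬝ᵥ (A *ᵥ |x|) := by
        simp only [dotProduct, mulVec, Finset.mul_sum, Pi.abs_apply]
        refine Finset.sum_le_sum fun i _ => Finset.sum_le_sum fun j _ => ?_
        rw [mul_left_comm, mul_left_comm |x i|, ← abs_mul]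
        exact mul_le_mul_of_nonneg_left (le_abs_self _) (hA₀ i j)

end RealSymmetric

section SignlessLaplacian

variable {V : Type*} [Fintype V] {G : SimpleGraph V} {x : V → ℝ} {q : ℝ}

lemma qIndex_eq_sSup_spectrum [DecidableEq V] :
    qIndex G = sSup (spectrum ℝ (signlessLaplacian G)) := by
  unfold qIndex
  congr!

lemma signlessLaplacian_eq_diagonal_add_adjMatrix [DecidableEq V] [DecidableRel G.Adj] :
    signlessLaplacian G = diagonal (fun v => (G.degree v : ℝ)) + G.adjMatrix ℝ := by
  unfold signlessLaplacian
  congr!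

lemma signlessLaplacian_eq_incMatrix_mul_transpose [DecidableEq V] [DecidableRel G.Adj] :
    signlessLaplacian G = G.incMatrix ℝ * (G.incMatrix ℝ)ᵀ := by
  ext i j
  rw [signlessLaplacian_eq_diagonal_add_adjMatrix, SimpleGraph.incMatrix_mul_transpose]
  by_cases hij : i = j <;> simp [hij]

lemma isHermitian_signlessLaplacian : (signlessLaplacian G).IsHermitian := by
  classical
  rw [signlessLaplacian_eq_incMatrix_mul_transpose, ← conjTranspose_eq_transpose_of_trivial]
  exact isHermitian_mul_conjTranspose_self _

lemma signlessLaplacian_apply_nonneg (i j : V) : 0 ≤ signlessLaplacian G i j := by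
  classical
  rw [signlessLaplacian_eq_incMatrix_mul_transpose, mul_apply]
  refine Finset.sum_nonneg fun e _ => ?_
  rw [transpose_apply, SimpleGraph.incMatrix_apply', SimpleGraph.incMatrix_apply']
  positivity

lemma transpose_incMatrix_mulVec_apply [DecidableEq V] [DecidableRel G.Adj] [Fintype G.edgeSet]
    (e : Sym2 V) :
    ((G.incMatrix ℝ)ᵀ *ᵥ x) e = if e ∈ G.edgeFinset then (e.map x).add else 0 := by
  induction e with | _ a b
  split_ifs with h
  · have hab : G.Adj a b := by simpa using h
    have hinc (i : V) : G.incMatrix ℝ i s(a, b) * x i =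
        (if i = a then x a else 0) + if i = b then x b else 0 := by
      have := hab.ne
      grind [SimpleGraph.incMatrix_apply', SimpleGraph.mk'_mem_incidenceSet_iff]
    simp [mulVec, dotProduct, hinc, Finset.sum_add_distrib]
  · refine Finset.sum_eq_zero fun i _ => ?_
    have hi : s(a, b) ∉ G.incidenceSet i := fun hi => h (by simpa using hi.1)
    simp [SimpleGraph.incMatrix_of_notMem_incidenceSet _ hi]

lemma dotProduct_signlessLaplacian_mulVec [Fintype G.edgeSet] :
    x ⬝ᵥ (signlessLaplacian G *ᵥ x) = ∑ e ∈ G.edgeFinset, (e.map x).add ^ 2 := by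
  classical
  rw [signlessLaplacian_eq_incMatrix_mul_transpose, ← mulVec_mulVec, dotProduct_mulVec,
    ← mulVec_transpose, dotProduct]
  simp only [transpose_incMatrix_mulVec_apply, ← sq, ite_pow, zero_pow two_ne_zero,
    Finset.sum_ite_mem, Finset.univ_inter]

lemma dotProduct_signlessLaplacian_mulVec_le (x : V → ℝ) :
    x ⬝ᵥ (signlessLaplacian G *ᵥ x) ≤ qIndex G * (x ⬝ᵥ x) := by
  classical
  rw [qIndex_eq_sSup_spectrum]
  exact dotProduct_mulVec_le_sSup_spectrum_mul isHermitian_signlessLaplacian x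

lemma signlessLaplacian_mulVec_apply [DecidableRel G.Adj] (v : V) :
    (signlessLaplacian G *ᵥ x) v = G.degree v * x v + ∑ u ∈ G.neighborFinset v, x u := by
  classical
  rw [signlessLaplacian_eq_diagonal_add_adjMatrix, add_mulVec, Pi.add_apply, mulVec_diagonal,
    SimpleGraph.adjMatrix_mulVec_apply]

end SignlessLaplacian

section Eigenvector

variable {V : Type*} [Fintype V] {G : SimpleGraph V} {x : V → ℝ} {q : ℝ}

lemma sub_degree_mul_eq_sum_neighborFinset [DecidableRel G.Adj]
    (hx : signlessLaplacian G *ᵥ x = q • x) (v : V) :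
    (q - G.degree v) * x v = ∑ u ∈ G.neighborFinset v, x u := by
  have h := congrFun hx v
  rw [signlessLaplacian_mulVec_apply, Pi.smul_apply, smul_eq_mul] at h
  linarith

lemma sub_length_mul_eq_sum_map (hx : signlessLaplacian G *ᵥ x = q • x) {v : V} {l : List V}
    (hl : l.Nodup) (hv : G.neighborSet v = {u | u ∈ l}) :
    (q - l.length) * x v = (l.map x).sum := by
  classical
  have hN : G.neighborFinset v = l.toFinset := by
    ext u
    simpa using Set.ext_iff.1 hv u
  rw [← List.sum_toFinset x hl, ← hN, ← sub_degree_mul_eq_sum_neighborFinset hx v,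
    ← SimpleGraph.card_neighborFinset_eq_degree, hN, List.toFinset_card_of_nodup hl]

lemma eq_zero_of_adj_of_eq_zero (hx : signlessLaplacian G *ᵥ x = q • x) (hx₀ : ∀ v, 0 ≤ x v)
    {u v : V} (huv : G.Adj u v) (hu : x u = 0) : x v = 0 := by
  classical
  have hsum := sub_degree_mul_eq_sum_neighborFinset hx u
  rw [hu, mul_zero, eq_comm, Finset.sum_eq_zero_iff_of_nonneg fun w _ => hx₀ w] at hsum
  exact hsum v (by simpa using huv)

lemma pos_of_connected (hG : G.Connected) (hx : signlessLaplacian G *ᵥ x = q • x)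
    (hx₀ : ∀ v, 0 ≤ x v) (hne : x ≠ 0) (v : V) : 0 < x v := by
  refine (hx₀ v).lt_of_ne' fun hv => hne (funext fun u => ?_)
  obtain ⟨p⟩ := hG.preconnected v u
  induction p with
  | nil => exact hv
  | cons h _ ih => exact ih (eq_zero_of_adj_of_eq_zero hx hx₀ h hv)

lemma exists_pos_signlessLaplacian_mulVec_eq (hG : G.Connected) :
    ∃ x : V → ℝ, (∀ v, 0 < x v) ∧ signlessLaplacian G *ᵥ x = qIndex G • x := by
  classical
  have := hG.nonempty
  obtain ⟨x, hne, hx₀, hx⟩ := exists_nonneg_mulVec_eq_sSup_spectrum_smul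
    (isHermitian_signlessLaplacian (G := G)) signlessLaplacian_apply_nonneg
  rw [← qIndex_eq_sSup_spectrum] at hx
  exact ⟨x, pos_of_connected hG hx hx₀ hne, hx⟩

lemma degree_le_of_pos [DecidableRel G.Adj] (hx : signlessLaplacian G *ᵥ x = q • x)
    (hpos : ∀ v, 0 < x v) (v : V) : (G.degree v : ℝ) ≤ q := by
  refine sub_nonneg.1 (nonneg_of_mul_nonneg_left ?_ (hpos v))
  rw [sub_degree_mul_eq_sum_neighborFinset hx v]
  exact Finset.sum_nonneg fun u _ => (hpos u).le

lemma le_sub_one_mul_of_adj (hx : signlessLaplacian G *ᵥ x = q • x) (hpos : ∀ v, 0 < x v)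
    {u v : V} (huv : G.Adj u v) : x v ≤ (q - 1) * x u := by
  classical
  have hdeg : (1 : ℝ) ≤ G.degree u :=
    Nat.one_le_cast.2 ((G.degree_pos_iff_exists_adj u).2 ⟨v, huv⟩)
  calc x v ≤ ∑ w ∈ G.neighborFinset u, x w :=
        Finset.single_le_sum (fun w _ => (hpos w).le) (by simpa using huv)
    _ = (q - G.degree u) * x u := (sub_degree_mul_eq_sum_neighborFinset hx u).symm
    _ ≤ (q - 1) * x u := mul_le_mul_of_nonneg_right (by linarith) (hpos u).le

lemma degree_add_one_le_of_pos [DecidableRel G.Adj] (hx : signlessLaplacian G *ᵥ x = q • x)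
    (hpos : ∀ v, 0 < x v) {v : V} (hv : 0 < G.degree v) : (G.degree v : ℝ) + 1 ≤ q := by
  have hq : 0 < q := (Nat.cast_pos.2 hv).trans_le (degree_le_of_pos hx hpos v)
  have h : G.degree v * x v ≤ ((q - 1) * (q - G.degree v)) * x v := by
    calc G.degree v * x v = ∑ _u ∈ G.neighborFinset v, x v := by simp
      _ ≤ ∑ u ∈ G.neighborFinset v, (q - 1) * x u := Finset.sum_le_sum fun u hu =>
          le_sub_one_mul_of_adj hx hpos (by simpa [G.adj_comm] using hu)
      _ = ((q - 1) * (q - G.degree v)) * x v := by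
          rw [← Finset.mul_sum, ← sub_degree_mul_eq_sum_neighborFinset hx v, mul_assoc]
  have h' : (G.degree v + 1) * q ≤ q * q := by linarith [le_of_mul_le_mul_right h (hpos v)]
  exact le_of_mul_le_mul_right h' hq

lemma sub_degree_add_one_mul_sub_le [DecidableEq V] [DecidableRel G.Adj]
    (hx : signlessLaplacian G *ᵥ x = q • x) (hx₀ : ∀ v, 0 ≤ x v) {u w : V}
    (hdeg : G.degree u ≤ G.degree w) :
    (q - G.degree u + 1) * (x u - x w) ≤
      ∑ v ∈ insert u (G.neighborFinset u) \ insert w (G.neighborFinset w), x v := by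
  have hclosed (v : V) :
      (q - G.degree v + 1) * x v = ∑ i ∈ insert v (G.neighborFinset v), x i := by
    rw [Finset.sum_insert (by simp), ← sub_degree_mul_eq_sum_neighborFinset hx v]
    ring
  have hdiff := Finset.sum_sdiff_sub_sum_sdiff (f := x)
    (s₁ := insert w (G.neighborFinset w)) (s₂ := insert u (G.neighborFinset u))
  rw [← hclosed u, ← hclosed w] at hdiff
  have hrest : 0 ≤ ∑ v ∈ insert w (G.neighborFinset w) \ insert u (G.neighborFinset u), x v :=
    Finset.sum_nonneg fun v _ => hx₀ v
  have hmul : (G.degree u : ℝ) * x w ≤ G.degree w * x w :=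
    mul_le_mul_of_nonneg_right (Nat.cast_le.2 hdeg) (hx₀ w)
  linarith

lemma le_of_insert_neighborSet_subset (hx : signlessLaplacian G *ᵥ x = q • x)
    (hpos : ∀ v, 0 < x v) {u w : V}
    (h : insert u (G.neighborSet u) ⊆ insert w (G.neighborSet w)) : x u ≤ x w := by
  classical
  have h' : insert u (G.neighborFinset u) ⊆ insert w (G.neighborFinset w) := by
    simpa [← Finset.coe_subset] using h
  have hdeg : G.degree u ≤ G.degree w := by simpa using Finset.card_le_card h'
  have hle := sub_degree_add_one_mul_sub_le hx (fun v => (hpos v).le) hdeg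
  rw [Finset.sdiff_eq_empty_iff_subset.2 h', Finset.sum_empty] at hle
  have := degree_le_of_pos hx hpos u
  linarith [nonpos_of_mul_nonpos_right hle (by linarith)]

end Eigenvector

section MoveEdge

variable {V : Type*} [Fintype V] {G : SimpleGraph V} {a b c d : V}

lemma dotProduct_signlessLaplacian_mulVec_moveEdge (hab : G.Adj a b) (hcd : c ≠ d)
    (hG : ¬ G.Adj c d) (x : V → ℝ) :
    x ⬝ᵥ (signlessLaplacian
        (SimpleGraph.fromEdgeSet ((G.edgeSet \ {s(a, b)}) ∪ {s(c, d)})) *ᵥ x) =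
      x ⬝ᵥ (signlessLaplacian G *ᵥ x) - (x a + x b) ^ 2 + (x c + x d) ^ 2 := by
  classical
  set F := SimpleGraph.fromEdgeSet ((G.edgeSet \ {s(a, b)}) ∪ {s(c, d)}) with hF
  have hE : F.edgeFinset = insert s(c, d) (G.edgeFinset.erase s(a, b)) := by
    ext e
    have hdiag : e ∈ G.edgeSet → ¬ e.IsDiag := G.not_isDiag_of_mem_edgeSet
    have hcd' : ¬ s(c, d).IsDiag := by simpa using hcd
    simp only [SimpleGraph.mem_edgeFinset, hF, SimpleGraph.edgeSet_fromEdgeSet, Set.mem_sdiff,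
      Sym2.mem_diagSet, Finset.mem_insert, Finset.mem_erase]
    grind
  rw [dotProduct_signlessLaplacian_mulVec, dotProduct_signlessLaplacian_mulVec, hE,
    Finset.sum_insert (by simp [hG]), Finset.sum_erase_eq_sub (by simpa using hab)]
  simp only [Sym2.map_mk, Sym2.add_mk]
  ring

lemma qIndex_lt_qIndex_moveEdge {x : V → ℝ} (hx : signlessLaplacian G *ᵥ x = qIndex G • x)
    (hab : G.Adj a b) (hcd : c ≠ d) (hG : ¬ G.Adj c d)
    (hlt : (x a + x b) ^ 2 < (x c + x d) ^ 2) :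
    qIndex G <
      qIndex (SimpleGraph.fromEdgeSet ((G.edgeSet \ {s(a, b)}) ∪ {s(c, d)})) := by
  refine lt_of_mul_lt_mul_right ?_ (dotProduct_star_self_nonneg x)
  calc qIndex G * (x ⬝ᵥ x) = x ⬝ᵥ (signlessLaplacian G *ᵥ x) := by
        rw [hx, dotProduct_smul, smul_eq_mul]
    _ < x ⬝ᵥ (signlessLaplacian _ *ᵥ x) := by
        rw [dotProduct_signlessLaplacian_mulVec_moveEdge hab hcd hG]
        linarith
    _ ≤ _ := dotProduct_signlessLaplacian_mulVec_le x

end MoveEdge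

/-- The local shape of an outerplanar graph of type `D₂` with maximum degree `|V| - 3`: all
neighborhoods on the short side of the hub `w`. The remaining vertices are adjacent to `w` and
otherwise unconstrained. In the paper's numbering `w = v_k`, `z = v_{n-1}`, `y = v_{n-2}`. -/
structure IsTypeD₂ {V : Type*} (G : SimpleGraph V) (v₀ v₁ v₂ v₃ w z y : V) : Prop where
  nodup : [v₀, v₁, v₂, v₃, w, z, y].Nodup
  neighborSet_v₀ : G.neighborSet v₀ = {v₁, z}
  neighborSet_v₁ : G.neighborSet v₁ = {v₀, v₂, v₃, w, z}
  neighborSet_v₂ : G.neighborSet v₂ = {v₁, v₃}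
  neighborSet_z : G.neighborSet z = {v₀, v₁, w, y}
  neighborSet_w : G.neighborSet w = {v₀, v₂, w}ᶜ

namespace IsTypeD₂

variable {V : Type*} {G : SimpleGraph V} {v₀ v₁ v₂ v₃ w z y : V}

lemma adj_v₀ (h : IsTypeD₂ G v₀ v₁ v₂ v₃ w z y) {u : V} : G.Adj v₀ u ↔ u = v₁ ∨ u = z := by
  simpa using Set.ext_iff.1 h.neighborSet_v₀ u

lemma adj_v₁ (h : IsTypeD₂ G v₀ v₁ v₂ v₃ w z y) {u : V} :
    G.Adj v₁ u ↔ u = v₀ ∨ u = v₂ ∨ u = v₃ ∨ u = w ∨ u = z := by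
  simpa using Set.ext_iff.1 h.neighborSet_v₁ u

lemma adj_v₂ (h : IsTypeD₂ G v₀ v₁ v₂ v₃ w z y) {u : V} : G.Adj v₂ u ↔ u = v₁ ∨ u = v₃ := by
  simpa using Set.ext_iff.1 h.neighborSet_v₂ u

lemma adj_z (h : IsTypeD₂ G v₀ v₁ v₂ v₃ w z y) {u : V} :
    G.Adj z u ↔ u = v₀ ∨ u = v₁ ∨ u = w ∨ u = y := by
  simpa using Set.ext_iff.1 h.neighborSet_z u

lemma adj_w (h : IsTypeD₂ G v₀ v₁ v₂ v₃ w z y) {u : V} :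
    G.Adj w u ↔ u ≠ v₀ ∧ u ≠ v₂ ∧ u ≠ w := by
  simpa using Set.ext_iff.1 h.neighborSet_w u

lemma not_adj_v₀_w (h : IsTypeD₂ G v₀ v₁ v₂ v₃ w z y) : ¬ G.Adj v₀ w := by
  simp [G.adj_comm v₀, h.adj_w]

lemma not_adj_v₀_v₃ (h : IsTypeD₂ G v₀ v₁ v₂ v₃ w z y) : ¬ G.Adj v₀ v₃ := by
  have := h.nodup
  simp_all [h.adj_v₀, eq_comm]

lemma not_adj_v₀_y (h : IsTypeD₂ G v₀ v₁ v₂ v₃ w z y) : ¬ G.Adj v₀ y := by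
  have := h.nodup
  simp_all [h.adj_v₀, eq_comm]

lemma not_adj_v₂_y (h : IsTypeD₂ G v₀ v₁ v₂ v₃ w z y) : ¬ G.Adj v₂ y := by
  have := h.nodup
  simp_all [h.adj_v₂, eq_comm]

lemma not_adj_z_v₃ (h : IsTypeD₂ G v₀ v₁ v₂ v₃ w z y) : ¬ G.Adj z v₃ := by
  have := h.nodup
  simp_all [h.adj_z, eq_comm]

lemma connected (h : IsTypeD₂ G v₀ v₁ v₂ v₃ w z y) : G.Connected := by
  have hwv₁ : G.Adj w v₁ := (h.adj_v₁.2 (by simp)).symm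
  refine G.connected_iff_exists_forall_reachable.2 ⟨w, fun u => ?_⟩
  by_cases hu : G.Adj w u
  · exact hu.reachable
  rw [h.adj_w, ← not_or, ← not_or, not_not] at hu
  rcases hu with rfl | rfl | rfl
  · exact hwv₁.reachable.trans (h.adj_v₁.2 (by simp)).reachable
  · exact hwv₁.reachable.trans (h.adj_v₁.2 (by simp)).reachable
  · rfl

variable [Fintype V] {x : V → ℝ} {q : ℝ}

lemma degree_w_add_three [DecidableRel G.Adj] (h : IsTypeD₂ G v₀ v₁ v₂ v₃ w z y) :
    G.degree w + 3 = Fintype.card V := by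
  classical
  have hN : G.neighborFinset w = {v₀, v₂, w}ᶜ := by
    ext u
    simp [h.adj_w]
  have hcard : ({v₀, v₂, w} : Finset V).card = 3 := by
    have := h.nodup
    grind
  rw [← SimpleGraph.card_neighborFinset_eq_degree, hN, ← hcard, Finset.card_compl_add_card]

lemma degree_v₃_le_degree_w [DecidableRel G.Adj] (h : IsTypeD₂ G v₀ v₁ v₂ v₃ w z y) :
    G.degree v₃ ≤ G.degree w := by
  classical
  have hnodup := h.nodup
  have hN : G.neighborFinset v₃ ⊆ {v₀, z, v₃}ᶜ := fun u hu => by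
    have hu' : G.Adj u v₃ := by simpa [G.adj_comm] using hu
    simp only [Finset.mem_compl, Finset.mem_insert, Finset.mem_singleton, not_or]
    exact ⟨fun h₀ => h.not_adj_v₀_v₃ (h₀ ▸ hu'), fun hz => h.not_adj_z_v₃ (hz ▸ hu'), hu'.ne⟩
  have hcard : ({v₀, z, v₃} : Finset V).card = 3 := by grind
  have hle := Finset.card_le_card hN
  rw [Finset.card_compl, hcard, SimpleGraph.card_neighborFinset_eq_degree] at hle
  have := h.degree_w_add_three
  omega

lemma card_sub_two_le (h : IsTypeD₂ G v₀ v₁ v₂ v₃ w z y)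
    (hx : signlessLaplacian G *ᵥ x = q • x) (hpos : ∀ v, 0 < x v) :
    (Fintype.card V : ℝ) - 2 ≤ q := by
  classical
  have hw : 0 < G.degree w := (G.degree_pos_iff_exists_adj w).2 ⟨v₁, (h.adj_v₁.2 (by simp)).symm⟩
  have hdeg := degree_add_one_le_of_pos hx hpos hw
  rw [← h.degree_w_add_three]
  push_cast
  linarith

lemma apply_v₀_le_apply_z (h : IsTypeD₂ G v₀ v₁ v₂ v₃ w z y)
    (hx : signlessLaplacian G *ᵥ x = q • x) (hpos : ∀ v, 0 < x v) : x v₀ ≤ x z := by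
  refine le_of_insert_neighborSet_subset hx hpos ?_
  rw [h.neighborSet_v₀, h.neighborSet_z]
  grind

lemma apply_y_le_apply_w (h : IsTypeD₂ G v₀ v₁ v₂ v₃ w z y)
    (hx : signlessLaplacian G *ᵥ x = q • x) (hpos : ∀ v, 0 < x v) : x y ≤ x w := by
  refine le_of_insert_neighborSet_subset hx hpos fun u hu => ?_
  have hnodup := h.nodup
  have := h.not_adj_v₀_y
  have := h.not_adj_v₂_y
  have := h.adj_w (u := u)
  have : u = y ∨ G.Adj u y := by simpa [G.adj_comm] using hu
  grind [SimpleGraph.mem_neighborSet]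

lemma two_mul_apply_v₃_sub_apply_w_le (h : IsTypeD₂ G v₀ v₁ v₂ v₃ w z y)
    (hx : signlessLaplacian G *ᵥ x = q • x) (hpos : ∀ v, 0 < x v) :
    2 * (x v₃ - x w) ≤ x v₂ := by
  classical
  have hsub : insert v₃ (G.neighborFinset v₃) \ insert w (G.neighborFinset w) ⊆ {v₂} := by
    intro u hu
    have hnodup := h.nodup
    have := h.not_adj_v₀_v₃
    have := h.adj_w (u := u)
    have := G.adj_comm v₃ u
    grind [SimpleGraph.mem_neighborFinset]
  have hle : (q - G.degree v₃ + 1) * (x v₃ - x w) ≤ x v₂ := by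
    refine (sub_degree_add_one_mul_sub_le hx (fun v => (hpos v).le) h.degree_v₃_le_degree_w).trans
      ((Finset.sum_le_sum_of_subset_of_nonneg hsub fun v _ _ => (hpos v).le).trans_eq ?_)
    exact Finset.sum_singleton _ _
  rcases le_total (x v₃) (x w) with hv₃ | hv₃
  · linarith [hpos v₂]
  · have hv₃_pos : 0 < G.degree v₃ :=
      (G.degree_pos_iff_exists_adj v₃).2 ⟨v₁, (h.adj_v₁.2 (by simp)).symm⟩
    refine (mul_le_mul_of_nonneg_right ?_ (sub_nonneg.2 hv₃)).trans hle
    linarith [degree_add_one_le_of_pos hx hpos hv₃_pos]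

lemma apply_v₁_add_apply_z_lt (h : IsTypeD₂ G v₀ v₁ v₂ v₃ w z y)
    (hx : signlessLaplacian G *ᵥ x = q • x) (hpos : ∀ v, 0 < x v) (hq : 10 ≤ q) :
    x v₁ + x z < x v₀ + x w := by
  have hnodup := h.nodup
  have hv₀ : (q - 2) * x v₀ = x v₁ + x z := by
    simpa using sub_length_mul_eq_sum_map (l := [v₁, z]) hx (by grind)
      (by ext u; simp [h.adj_v₀])
  have hv₁ : (q - 5) * x v₁ = x v₀ + (x v₂ + (x v₃ + (x w + x z))) := by
    simpa using sub_length_mul_eq_sum_map (l := [v₀, v₂, v₃, w, z]) hx (by grind)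
      (by ext u; simp [h.adj_v₁])
  have hv₂ : (q - 2) * x v₂ = x v₁ + x v₃ := by
    simpa using sub_length_mul_eq_sum_map (l := [v₁, v₃]) hx (by grind)
      (by ext u; simp [h.adj_v₂])
  have hz : (q - 4) * x z = x v₀ + (x v₁ + (x w + x y)) := by
    simpa using sub_length_mul_eq_sum_map (l := [v₀, v₁, w, y]) hx (by grind)
      (by ext u; simp [h.adj_z])
  have hyw := h.apply_y_le_apply_w hx hpos
  have hv₃w := h.two_mul_apply_v₃_sub_apply_w_le hx hpos
  have hv₀z := h.apply_v₀_le_apply_z hx hpos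
  by_contra! hle
  have hw : (q - 8) * x v₀ + x z ≤ 3 / 2 * x v₂ := by
    have hsum : (q - 6) * (x v₁ + x z - x v₀) =
        x v₂ + x v₃ + 2 * x w + x y - x z - (q - 8) * x v₀ := by
      linear_combination hv₁ + hz
    have hmul : (10 - 6) * x w ≤ (q - 6) * (x v₁ + x z - x v₀) :=
      mul_le_mul (by linarith) (by linarith) (hpos w).le (by linarith)
    rw [hsum] at hmul
    linarith
  have hv₂' : 15 / 2 * x v₂ ≤ x v₁ + x w := by
    have := mul_le_mul_of_nonneg_right hq (hpos v₂).le
    linarith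
  have := mul_le_mul_of_nonneg_right hq (hpos v₀).le
  linarith [hpos z]

end IsTypeD₂

theorem stmt_16_general {V : Type*} [Fintype V] {G : SimpleGraph V} {v₀ v₁ v₂ v₃ w z y : V}
    (hG : IsTypeD₂ G v₀ v₁ v₂ v₃ w z y) (hcard : 12 ≤ Fintype.card V) :
    qIndex G < qIndex (SimpleGraph.fromEdgeSet ((G.edgeSet \ {s(v₁, z)}) ∪ {s(v₀, w)})) := by
  obtain ⟨x, hpos, hx⟩ := exists_pos_signlessLaplacian_mulVec_eq hG.connected
  have hq : 10 ≤ qIndex G := by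
    have hcard' : (12 : ℝ) ≤ Fintype.card V := by exact_mod_cast hcard
    linarith [hG.card_sub_two_le hx hpos]
  have hlt := hG.apply_v₁_add_apply_z_lt hx hpos hq
  have hv₀w : v₀ ≠ w := by
    have := hG.nodup
    grind
  exact qIndex_lt_qIndex_moveEdge hx (hG.adj_v₁.2 (by simp)) hv₀w hG.not_adj_v₀_w
    (pow_lt_pow_left₀ hlt (add_pos (hpos v₁) (hpos z)).le two_ne_zero)

/-- for the maximal outer-planar graph of type `D_2` with `Δ = n - 3`,
if `n ≥ 13` then deleting the edge `v_1 v_{n-1}` and adding the edge `v_0 v_k`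
increases the `Q`-index. -/
theorem stmt_16 (n k : ℕ) (hn : 8 ≤ n) (hk1 : 4 ≤ k) (hk2 : k ≤ n - 3)
    (G : SimpleGraph (Fin n))
    (h0 : G.neighborSet ⟨0, by omega⟩ = {⟨1, by omega⟩, ⟨n - 1, by omega⟩})
    (h1 : G.neighborSet ⟨1, by omega⟩ =
      {⟨0, by omega⟩, ⟨2, by omega⟩, ⟨3, by omega⟩, ⟨k, by omega⟩, ⟨n - 1, by omega⟩})
    (h2 : G.neighborSet ⟨2, by omega⟩ = {⟨1, by omega⟩, ⟨3, by omega⟩})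
    (hlast : G.neighborSet ⟨n - 1, by omega⟩ =
      {⟨0, by omega⟩, ⟨1, by omega⟩, ⟨k, by omega⟩, ⟨n - 2, by omega⟩})
    (hk' : G.neighborSet ⟨k, by omega⟩ =
      insert ⟨1, by omega⟩ {u : Fin n | 3 ≤ u.val ∧ u ≠ ⟨k, by omega⟩})
    (hn13 : 13 ≤ n) :
    qIndex G <
      qIndex (SimpleGraph.fromEdgeSet
        ((G.edgeSet \ {s((⟨1, by omega⟩ : Fin n), (⟨n - 1, by omega⟩ : Fin n))}) ∪
          {s((⟨0, by omega⟩ : Fin n), (⟨k, by omega⟩ : Fin n))})) := by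
  refine stmt_16_general (v₃ := ⟨3, by omega⟩) (y := ⟨n - 2, by omega⟩)
    ⟨?_, h0, h1, h2, hlast, ?_⟩ (by rw [Fintype.card_fin]; omega)
  · simp only [List.nodup_cons, List.mem_cons, List.not_mem_nil, or_false, not_or,
      not_false_eq_true, List.nodup_nil, and_true, Fin.ext_iff]
    omega
  · ext u
    simp only [hk', ne_eq, Fin.ext_iff, Set.mem_insert_iff, Set.mem_ofPred_eq, Set.mem_compl_iff,
      Set.mem_singleton_iff]
    omega
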